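/- Let α > 1 and g(t) = t²/(1+t)(ln(1+t))^α. Then for all z > y ≥ 0, g(z) - g(y) ≥ (z-y)²/(1+z-y) · (ln(1+z-y))^α, and consequently g(z) - g(y) ≥ (1/2)(z-y)(ln(1+z-y))^α - (ln 2)^α · 𝟙_{z-y ≤ 1}. -/

import Mathlib

noncomputable def g2 (α t : ℝ) : ℝ := t ^ 2 / (1 + t) * Real.log (1 + t) ^ α

/-- The quotient `g2 α t / t` is monotone on `[0, ∞)`. -/
theorem g2_quotient_mono {α : ℝ} (hα : 0 ≤ α) {s t : ℝ} (hs : 0 ≤ s) (hst : s ≤ t) :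
    s / (1 + s) * Real.log (1 + s) ^ α ≤ t / (1 + t) * Real.log (1 + t) ^ α := by
  have hlog : 0 ≤ Real.log (1 + s) := Real.log_nonneg (by linarith)
  have hdiv : s / (1 + s) ≤ t / (1 + t) := by
    rw [div_le_div_iff₀ (by linarith) (by linarith)]
    nlinarith
  have hpow : Real.log (1 + s) ^ α ≤ Real.log (1 + t) ^ α :=
    Real.rpow_le_rpow hlog (Real.log_le_log (by linarith) (by linarith)) hα
  exact mul_le_mul hdiv hpow (Real.rpow_nonneg hlog α)
    (div_nonneg (hs.trans hst) (by linarith))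

theorem g2_eq_mul (α t : ℝ) : g2 α t = t * (t / (1 + t) * Real.log (1 + t) ^ α) := by
  unfold g2
  ring

theorem g2_superadditive {α : ℝ} (hα : 0 ≤ α) {a b : ℝ} (ha : 0 ≤ a) (hb : 0 ≤ b) :
    g2 α a + g2 α b ≤ g2 α (a + b) := by
  have h₁ := mul_le_mul_of_nonneg_left
    (g2_quotient_mono hα ha (le_add_of_nonneg_right hb)) ha
  have h₂ := mul_le_mul_of_nonneg_left
    (g2_quotient_mono hα hb (le_add_of_nonneg_left ha)) hb
  simp only [g2_eq_mul]
  linarith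

theorem half_mul_log_rpow_sub_le_g2 {α : ℝ} (hα : 0 ≤ α) {w : ℝ} (hw : 0 ≤ w) :
    (1 / 2) * w * Real.log (1 + w) ^ α
      - Real.log 2 ^ α * (if w ≤ 1 then (1 : ℝ) else 0) ≤ g2 α w := by
  have hlog : 0 ≤ Real.log (1 + w) := Real.log_nonneg (by linarith)
  have hpow : 0 ≤ Real.log (1 + w) ^ α := Real.rpow_nonneg hlog α
  split_ifs with h
  · have hle : Real.log (1 + w) ^ α ≤ Real.log 2 ^ α :=
      Real.rpow_le_rpow hlog (Real.log_le_log (by linarith) (by linarith)) hα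
    have hg : 0 ≤ g2 α w := mul_nonneg (by positivity) hpow
    nlinarith
  · have hdiv : 1 / 2 * w ≤ w ^ 2 / (1 + w) := by
      rw [le_div_iff₀ (by linarith)]
      nlinarith
    simpa [g2] using mul_le_mul_of_nonneg_right hdiv hpow

/-- For `α > 1` and `z > y ≥ 0`, with `g(t) = t²/(1+t)·(log(1+t))^α`:
`g(z) - g(y) ≥ (z-y)²/(1+(z-y))·(log(1+(z-y)))^α` and consequently
`g(z) - g(y) ≥ ½(z-y)(log(1+(z-y)))^α − (log 2)^α · 𝟙_{z-y ≤ 1}`. -/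
theorem stmt_2 (α : ℝ) (hα : 1 < α) (y z : ℝ) (hy : 0 ≤ y) (hyz : y < z) :
    (z - y) ^ 2 / (1 + (z - y)) * Real.log (1 + (z - y)) ^ α ≤ g2 α z - g2 α y ∧
    (1 / 2) * (z - y) * Real.log (1 + (z - y)) ^ α
        - Real.log 2 ^ α * (if z - y ≤ 1 then (1 : ℝ) else 0) ≤ g2 α z - g2 α y := by
  have hα₀ : 0 ≤ α := by linarith
  have hw : 0 ≤ z - y := by linarith
  have hsuper : g2 α (z - y) ≤ g2 α z - g2 α y := by
    have h := g2_superadditive hα₀ hw hy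
    rw [sub_add_cancel] at h
    linarith
  exact ⟨hsuper, (half_mul_log_rpow_sub_le_g2 hα₀ hw).trans hsuper⟩
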